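/- The sum ∑_{n=1}^∞ H_n / ((2n+1) C(2n,n)) equals -(π/(3√3)) log 3 - (2/√3) δ₁, where δ₁ is the real number given by δ₁ = i ∑_{n=1}^∞ [((√3 + i)/(2√3))^n - ((√3 - i)/(2√3))^n] / n². -/

import Mathlib

/-!
The Beta integral turns `1 / ((2n+1) C(2n,n))` into `∫₀¹ (t(1-t))ⁿ dt`, so the generating function
of the harmonic numbers gives, for `‖x‖ < 4`,
`∑ Hₙ xⁿ / ((2n+1) C(2n,n)) = ∫₀¹ -log (1 - x t(1-t)) / (1 - x t(1-t)) dt`.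
Choose `a` with `x a(1-a) = -(1-2a)²` and let `z = a + t(1-2a)` run from `a` to `1-a`: then
`1 - x t(1-t) = z(1-z) / (a(1-a))` factors, and the integrand has a primitive built from `log` and
`Li₂` at `z` and `1-z`. The theorem is the case `x = 1`, `a(1-a) = 1/3`.
-/

open Complex Metric MeasureTheory

/-- The dilogarithm `Li₂ z = ∑_{n ≥ 1} zⁿ / n²` on the closed unit disc, where the series converges
(elsewhere the value of the `tsum` is junk). In the notation `dilog x = Li₂ (1 - x)`, it is
`dilog (1 - z)`. -/
noncomputable def liTwo (z : ℂ) : ℂ := ∑' n : ℕ, z ^ (n + 1) / ((n : ℂ) + 1) ^ 2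

lemma norm_natCast_add_one (n : ℕ) : ‖(n : ℂ) + 1‖ = n + 1 := by
  exact_mod_cast Complex.norm_natCast (n + 1)

lemma summable_liTwo {z : ℂ} (hz : ‖z‖ ≤ 1) :
    Summable fun n : ℕ => z ^ (n + 1) / ((n : ℂ) + 1) ^ 2 := by
  have hsq : Summable fun n : ℕ => 1 / ((n : ℝ) + 1) ^ 2 := by
    exact_mod_cast (summable_nat_add_iff 1).2 (Real.summable_one_div_nat_pow.2 one_lt_two)
  refine hsq.of_norm_bounded fun n => ?_
  rw [norm_div, norm_pow, norm_pow, norm_natCast_add_one]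
  gcongr
  exact pow_le_one₀ (norm_nonneg z) hz

lemma liTwo_sub_liTwo {z w : ℂ} (hz : ‖z‖ ≤ 1) (hw : ‖w‖ ≤ 1) :
    liTwo z - liTwo w = ∑' n : ℕ, (z ^ (n + 1) - w ^ (n + 1)) / ((n : ℂ) + 1) ^ 2 := by
  simp only [liTwo, sub_div, (summable_liTwo hz).tsum_sub (summable_liTwo hw)]

lemma tsum_pow_div_add_one {z : ℂ} (hz : ‖z‖ < 1) (hz0 : z ≠ 0) :
    ∑' n : ℕ, z ^ n / ((n : ℂ) + 1) = -log (1 - z) / z := by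
  rw [← ((hasSum_taylorSeries_neg_log' hz).div_const z).tsum_eq]
  exact tsum_congr fun n => by field_simp; ring

lemma hasDerivAt_liTwo {z : ℂ} (hz : ‖z‖ < 1) (hz0 : z ≠ 0) :
    HasDerivAt liTwo (-log (1 - z) / z) z := by
  obtain ⟨r, hzr, hr⟩ := exists_between hz
  have hmem : z ∈ ball (0 : ℂ) r := mem_ball_zero_iff.2 hzr
  rw [← tsum_pow_div_add_one hz hz0]
  refine hasDerivAt_tsum_of_isPreconnected
    (g := fun (n : ℕ) (w : ℂ) => w ^ (n + 1) / ((n : ℂ) + 1) ^ 2)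
    (g' := fun (n : ℕ) (w : ℂ) => w ^ n / ((n : ℂ) + 1)) (u := fun n => r ^ n) (t := ball 0 r)
    (summable_geometric_of_lt_one ((norm_nonneg z).trans hzr.le) hr) isOpen_ball
    (convex_ball _ _).isPreconnected (fun n y _ => ?_) (fun n y hy => ?_)
    hmem (summable_liTwo hz.le) hmem
  · have hn : (n : ℂ) + 1 ≠ 0 := Nat.cast_add_one_ne_zero n
    convert! (hasDerivAt_pow (n + 1) y).div_const (((n : ℂ) + 1) ^ 2) using 1
    push_cast
    field_simp
  · rw [norm_div, norm_pow, norm_natCast_add_one]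
    calc ‖y‖ ^ n / (n + 1) ≤ ‖y‖ ^ n := div_le_self (by positivity) (by simp)
      _ ≤ r ^ n := by gcongr; exact (mem_ball_zero_iff.1 hy).le

lemma sum_range_succ_pow_div_mul_pow (z : ℂ) (n : ℕ) :
    ∑ k ∈ Finset.range (n + 1), z ^ k / (k : ℂ) * z ^ (n - k) = (harmonic n : ℂ) * z ^ n := by
  have hterm : ∀ k ∈ Finset.range (n + 1),
      z ^ k / (k : ℂ) * z ^ (n - k) = (k : ℂ)⁻¹ * z ^ n := fun k hk => by
    rw [← pow_mul_pow_sub z (Finset.mem_range_succ_iff.1 hk)]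
    ring
  rw [Finset.sum_congr rfl hterm, ← Finset.sum_mul, Finset.sum_range_succ']
  simp [harmonic]

lemma hasSum_harmonic_mul_pow {z : ℂ} (hz : ‖z‖ < 1) :
    HasSum (fun n : ℕ => (harmonic n : ℂ) * z ^ n) (-log (1 - z) / (1 - z)) := by
  have hlog := hasSum_taylorSeries_neg_log hz
  have hgeom := hasSum_geometric_of_norm_lt_one hz
  have hprod := hasSum_sum_range_mul_of_summable_norm hlog.summable.norm hgeom.summable.norm
  simpa only [sum_range_succ_pow_div_mul_pow, hlog.tsum_eq, hgeom.tsum_eq, ← div_eq_mul_inv]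
    using hprod

lemma integral_pow_mul_one_sub_pow (m n : ℕ) :
    ∫ t in (0 : ℝ)..1, (t : ℂ) ^ m * (1 - t) ^ n =
      (m.factorial * n.factorial : ℂ) / (m + n + 1).factorial := by
  have hre (k : ℕ) : 0 < (k + 1 : ℂ).re := by
    rw [add_re, natCast_re, one_re]
    positivity
  have hbeta := betaIntegral_eq_Gamma_mul_div (m + 1) (n + 1) (hre m) (hre n)
  rw [Gamma_nat_eq_factorial, Gamma_nat_eq_factorial,
    show (m + 1 + (n + 1) : ℂ) = (m + n + 1 : ℕ) + 1 by push_cast; ring,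
    Gamma_nat_eq_factorial] at hbeta
  simpa [betaIntegral] using hbeta

lemma integral_mul_one_sub_pow (n : ℕ) :
    ∫ t in (0 : ℝ)..1, ((t : ℂ) * (1 - t)) ^ n = 1 / ((2 * n + 1) * n.centralBinom) := by
  have hfact : (n.centralBinom : ℂ) * n.factorial * n.factorial = (2 * n).factorial := by
    have h := Nat.choose_mul_factorial_mul_factorial (n := 2 * n) (k := n) (by lia)
    rw [show 2 * n - n = n by lia] at h
    exact_mod_cast h
  have hn : (n.factorial : ℂ) ≠ 0 := by exact_mod_cast n.factorial_ne_zero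
  have hc : (n.centralBinom : ℂ) ≠ 0 := by exact_mod_cast n.centralBinom_ne_zero
  have hodd : (2 * n + 1 : ℂ) ≠ 0 := by exact_mod_cast (2 * n).succ_ne_zero
  simp only [mul_pow]
  rw [integral_pow_mul_one_sub_pow, ← two_mul, Nat.factorial_succ]
  push_cast
  rw [← hfact]
  field_simp

lemma norm_mul_one_sub_le {t : ℝ} (ht : t ∈ Set.Icc 0 1) : ‖(t : ℂ) * (1 - t)‖ ≤ 1 / 4 := by
  have h : 0 ≤ t * (1 - t) := mul_nonneg ht.1 (sub_nonneg.2 ht.2)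
  rw [show (t : ℂ) * (1 - t) = (t * (1 - t) : ℝ) by push_cast; rfl, norm_real,
    Real.norm_of_nonneg h]
  nlinarith [sq_nonneg (t - 1 / 2)]

lemma norm_mul_mul_one_sub_le (x : ℂ) {t : ℝ} (ht : t ∈ Set.Icc 0 1) :
    ‖x * (t * (1 - t))‖ ≤ ‖x‖ / 4 := by
  rw [norm_mul, div_eq_mul_one_div]
  gcongr
  exact norm_mul_one_sub_le ht

lemma hasSum_harmonic_mul_pow_div_centralBinom {x : ℂ} (hx : ‖x‖ < 4) :
    HasSum (fun n : ℕ => (harmonic n : ℂ) * x ^ n / ((2 * n + 1) * n.centralBinom))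
      (∫ t in (0 : ℝ)..1, -log (1 - x * (t * (1 - t))) / (1 - x * (t * (1 - t)))) := by
  have hIcc {t : ℝ} (ht : t ∈ Set.uIoc (0 : ℝ) 1) : t ∈ Set.Icc (0 : ℝ) 1 :=
    Set.Ioc_subset_Icc_self (by rwa [Set.uIoc_of_le zero_le_one] at ht)
  have hr : ‖((‖x‖ / 4 : ℝ) : ℂ)‖ < 1 := by
    rw [norm_real, Real.norm_of_nonneg (by positivity)]
    linarith
  have key := intervalIntegral.hasSum_integral_of_dominated_convergence (μ := volume)
    (a := 0) (b := 1)
    (F := fun n (t : ℝ) => (harmonic n : ℂ) * (x * (t * (1 - t))) ^ n)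
    (f := fun t : ℝ => -log (1 - x * (t * (1 - t))) / (1 - x * (t * (1 - t))))
    (fun n _ => ‖(harmonic n : ℂ) * ((‖x‖ / 4 : ℝ) : ℂ) ^ n‖)
    (fun n => Continuous.aestronglyMeasurable (by fun_prop))
    (fun n => .of_forall fun t ht => ?_)
    (.of_forall fun _ _ => (hasSum_harmonic_mul_pow hr).summable.norm)
    intervalIntegrable_const
    (.of_forall fun t ht => hasSum_harmonic_mul_pow ?_)
  · convert! key using 2 with n
    simp only [mul_pow x]
    rw [intervalIntegral.integral_const_mul, intervalIntegral.integral_const_mul,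
      integral_mul_one_sub_pow]
    ring
  · rw [norm_mul, norm_mul, norm_pow, norm_pow, norm_real, Real.norm_of_nonneg (by positivity)]
    gcongr
    exact norm_mul_mul_one_sub_le x (hIcc ht)
  · linarith [norm_mul_mul_one_sub_le x (hIcc ht)]

lemma log_mul_of_re_pos {z w : ℂ} (hz : 0 < z.re) (hw : 0 < w.re) :
    log (z * w) = log z + log w := by
  have hargz := abs_lt.1 (abs_arg_lt_pi_div_two_iff.2 (.inl hz))
  have hargw := abs_lt.1 (abs_arg_lt_pi_div_two_iff.2 (.inl hw))
  refine log_mul (fun h => by simp [h] at hz) (fun h => by simp [h] at hw) ⟨?_, ?_⟩ <;>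
    linarith [hargz.1, hargz.2, hargw.1, hargw.2]

lemma log_div_of_re_pos {z w : ℂ} (hz : 0 < z.re) (hw : 0 < w.re) :
    log (z / w) = log z - log w := by
  have hinv : 0 < (w⁻¹).re := by
    rw [inv_re]
    exact div_pos hw (normSq_pos.2 fun h => by simp [h] at hw)
  rw [div_eq_mul_inv, log_mul_of_re_pos hz hinv,
    log_inv w (slitPlane_arg_ne_pi (.inl hw)), sub_eq_add_neg]

lemma re_mul_one_sub_pos {z : ℂ} (hz : z.re ∈ Set.Ioo 0 1) : 0 < (z * (1 - z)).re := by
  have h : 0 < z.re * (1 - z.re) := mul_pos hz.1 (sub_pos.2 hz.2)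
  simp only [mul_re, sub_re, one_re, sub_im, one_im]
  nlinarith [sq_nonneg z.im]

lemma mul_one_sub_ne_zero_of_re_mem_Ioo {z : ℂ} (hz : z.re ∈ Set.Ioo 0 1) : z * (1 - z) ≠ 0 :=
  fun h => (re_mul_one_sub_pos hz).ne' (by rw [h, zero_re])

lemma log_mul_one_sub {z : ℂ} (hz : z.re ∈ Set.Ioo 0 1) :
    log (z * (1 - z)) = log z + log (1 - z) :=
  log_mul_of_re_pos hz.1 (by simpa using hz.2)

lemma log_mul_one_sub_div {a z : ℂ} (ha : a.re ∈ Set.Ioo 0 1) (hz : z.re ∈ Set.Ioo 0 1) :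
    log (z * (1 - z) / (a * (1 - a))) = log z + log (1 - z) - (log a + log (1 - a)) := by
  rw [log_div_of_re_pos (re_mul_one_sub_pos hz) (re_mul_one_sub_pos ha), log_mul_one_sub hz,
    log_mul_one_sub ha]

/-- The open lens cut out by `‖z‖ < 1` and `‖1 - z‖ < 1`, where `log` and `Li₂` are differentiable
at both `z` and `1 - z`. -/
def unitLens : Set ℂ := ball 0 1 ∩ ball 1 1

lemma mem_unitLens {z : ℂ} : z ∈ unitLens ↔ ‖z‖ < 1 ∧ ‖1 - z‖ < 1 := by
  simp [unitLens, dist_eq, norm_sub_rev z 1]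

lemma convex_unitLens : Convex ℝ unitLens := (convex_ball _ _).inter (convex_ball _ _)

lemma one_sub_mem_unitLens {z : ℂ} (hz : z ∈ unitLens) : 1 - z ∈ unitLens := by
  rw [mem_unitLens, sub_sub_cancel]
  exact (mem_unitLens.1 hz).symm

lemma re_mem_Ioo_of_mem_unitLens {z : ℂ} (hz : z ∈ unitLens) : z.re ∈ Set.Ioo 0 1 := by
  obtain ⟨hnorm, hnorm'⟩ := mem_unitLens.1 hz
  have hre := (re_le_norm (1 - z)).trans_lt hnorm'
  exact ⟨by simpa using hre, (re_le_norm z).trans_lt hnorm⟩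

lemma add_smul_mem_unitLens {a : ℂ} (ha : a ∈ unitLens) {t : ℝ} (ht : t ∈ Set.Icc 0 1) :
    a + t • (1 - 2 * a) ∈ unitLens := by
  rw [show 1 - 2 * a = 1 - a - a by ring]
  exact convex_unitLens.add_smul_sub_mem ha (one_sub_mem_unitLens ha) ht

/-- With `c = log a + log (1 - a)`, the integrand `log (z(1-z) / (a(1-a))) / (z(1-z))` to which
the substitution `z = a + t(1-2a)` leads. -/
noncomputable def dilogIntegrand (c z : ℂ) : ℂ := (log z + log (1 - z) - c) / (z * (1 - z))

lemma continuousOn_dilogIntegrand (c : ℂ) :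
    ContinuousOn (dilogIntegrand c) (re ⁻¹' Set.Ioo 0 1) := by
  refine ContinuousOn.div (.sub (.add ?_ ?_) continuousOn_const) (by fun_prop)
    fun z hz => mul_one_sub_ne_zero_of_re_mem_Ioo hz
  · exact continuousOn_id.clog fun z hz => .inl hz.1
  · exact ContinuousOn.clog (by fun_prop) fun z hz => .inl (by simpa using hz.2)

/-- A primitive of `(log z + log (1 - z) - c) / z` on the lens. Since the numerator is symmetric
under `z ↦ 1 - z`, its antisymmetrisation is a primitive of `dilogIntegrand c`. -/
noncomputable def logDilogPrimitive (c z : ℂ) : ℂ := log z ^ 2 / 2 - liTwo z - c * log z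

lemma hasDerivAt_logDilogPrimitive (c : ℂ) {z : ℂ} (hz : z ∈ unitLens) :
    HasDerivAt (logDilogPrimitive c) ((log z + log (1 - z) - c) / z) z := by
  have hslit : z ∈ slitPlane := .inl (re_mem_Ioo_of_mem_unitLens hz).1
  have hz0 : z ≠ 0 := slitPlane_ne_zero hslit
  have hlog := hasDerivAt_log hslit
  convert! (((hlog.pow 2).div_const 2).sub
    (hasDerivAt_liTwo (mem_unitLens.1 hz).1 hz0)).sub (hlog.const_mul c) using 1
  push_cast
  field_simp
  ring

lemma hasDerivAt_logDilogPrimitive_sub_reflect (c : ℂ) {z : ℂ} (hz : z ∈ unitLens) :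
    HasDerivAt (fun w => logDilogPrimitive c w - logDilogPrimitive c (1 - w))
      (dilogIntegrand c z) z := by
  have hreflect := (hasDerivAt_logDilogPrimitive c (one_sub_mem_unitLens hz)).comp_const_sub 1 z
  convert! (hasDerivAt_logDilogPrimitive c hz).sub hreflect using 1
  obtain ⟨hz₀, hz₁⟩ := mul_ne_zero_iff.1
    (mul_one_sub_ne_zero_of_re_mem_Ioo (re_mem_Ioo_of_mem_unitLens hz))
  rw [sub_sub_cancel, dilogIntegrand]
  field_simp
  ring

lemma integral_dilogIntegrand (c : ℂ) {a : ℂ} (ha : a ∈ unitLens) :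
    (1 - 2 * a) * ∫ t in (0 : ℝ)..1, dilogIntegrand c (a + t • (1 - 2 * a)) =
      2 * (logDilogPrimitive c (1 - a) - logDilogPrimitive c a) := by
  have hftc := intervalIntegral.integral_unitInterval_deriv_eq_sub (z₀ := a) (z₁ := 1 - 2 * a)
    ((continuousOn_dilogIntegrand c).comp (by fun_prop)
      fun t ht => re_mem_Ioo_of_mem_unitLens (add_smul_mem_unitLens ha ht))
    fun t ht => hasDerivAt_logDilogPrimitive_sub_reflect c (add_smul_mem_unitLens ha ht)
  rw [show a + (1 - 2 * a) = 1 - a by ring, sub_sub_cancel, smul_eq_mul] at hftc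
  exact hftc.trans (by ring)

lemma one_sub_mul_eq_div {K : Type*} [Field K] {a x : K} (ha : a * (1 - a) ≠ 0)
    (hx : x * (a * (1 - a)) = -(1 - 2 * a) ^ 2) (t : K) :
    1 - x * (t * (1 - t)) =
      (a + t * (1 - 2 * a)) * (1 - (a + t * (1 - 2 * a))) / (a * (1 - a)) := by
  rw [eq_div_iff ha]
  linear_combination -(t * (1 - t)) * hx

theorem tsum_harmonic_mul_pow_div_centralBinom {a x : ℂ} (ha : a ∈ unitLens) (hx : ‖x‖ < 4)
    (hax : x * (a * (1 - a)) = -(1 - 2 * a) ^ 2) :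
    (1 - 2 * a) * ∑' n : ℕ, (harmonic n : ℂ) * x ^ n / ((2 * n + 1) * n.centralBinom) =
      a * (1 - a) * (log (1 - a) ^ 2 - log a ^ 2 + 2 * (liTwo (1 - a) - liTwo a)) := by
  have hre := re_mem_Ioo_of_mem_unitLens ha
  have hne := mul_one_sub_ne_zero_of_re_mem_Ioo hre
  have hintegrand : ∀ t ∈ Set.uIcc (0 : ℝ) 1,
      -log (1 - x * (t * (1 - t))) / (1 - x * (t * (1 - t))) =
        -(a * (1 - a)) * dilogIntegrand (log a + log (1 - a)) (a + t • (1 - 2 * a)) := by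
    intro t ht
    rw [Set.uIcc_of_le zero_le_one] at ht
    rw [one_sub_mul_eq_div hne hax, ← real_smul, log_mul_one_sub_div hre
      (re_mem_Ioo_of_mem_unitLens (add_smul_mem_unitLens ha ht))]
    simp only [dilogIntegrand, div_div_eq_mul_div]
    ring
  rw [(hasSum_harmonic_mul_pow_div_centralBinom hx).tsum_eq,
    intervalIntegral.integral_congr hintegrand, intervalIntegral.integral_const_mul,
    mul_left_comm, integral_dilogIntegrand _ ha, logDilogPrimitive, logDilogPrimitive]
  ring

/-- The root in the upper half plane of `a * (1 - a) = 1 / 3`, that is, of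
`-(1 - 2 * a) ^ 2 / (a * (1 - a)) = 1`. The other root is `1 - deltaArg`, and `δ₁` is the value of
`I * (liTwo deltaArg - liTwo (1 - deltaArg))`. -/
noncomputable def deltaArg : ℂ := ((√3 : ℂ) + I) / (2 * (√3 : ℂ))

lemma ofReal_sqrt_three_sq : (√3 : ℂ) ^ 2 = 3 := by
  exact_mod_cast Real.sq_sqrt (by norm_num : (0 : ℝ) ≤ 3)

lemma ofReal_sqrt_three_ne_zero : (√3 : ℂ) ≠ 0 := by simp

lemma one_sub_deltaArg : 1 - deltaArg = ((√3 : ℂ) - I) / (2 * (√3 : ℂ)) := by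
  have hsqrt := ofReal_sqrt_three_ne_zero
  rw [deltaArg]
  field_simp
  ring

lemma one_sub_two_mul_deltaArg : 1 - 2 * deltaArg = -I / √3 := by
  have hsqrt := ofReal_sqrt_three_ne_zero
  rw [deltaArg]
  field_simp
  ring

lemma deltaArg_mul_one_sub : deltaArg * (1 - deltaArg) = 1 / 3 := by
  have hsqrt := ofReal_sqrt_three_ne_zero
  rw [one_sub_deltaArg, deltaArg]
  field_simp
  linear_combination -3 * I_sq - ofReal_sqrt_three_sq

lemma one_sub_deltaArg_eq_conj : 1 - deltaArg = starRingEnd ℂ deltaArg := by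
  rw [one_sub_deltaArg, deltaArg]
  simp only [map_div₀, map_add, map_mul, conj_ofReal, conj_I, map_ofNat, sub_eq_add_neg]

lemma deltaArg_eq_exp : deltaArg = exp ((-Real.log 3 / 2 : ℝ) + (Real.pi / 6 : ℝ) * I) := by
  have hexp : Real.exp (-Real.log 3 / 2) = 1 / √3 := by
    rw [neg_div, Real.exp_neg, Real.exp_half, Real.exp_log three_pos, one_div]
  have hsqrt := ofReal_sqrt_three_ne_zero
  rw [exp_add_mul_I, ← ofReal_exp, ← ofReal_cos, ← ofReal_sin, Real.cos_pi_div_six,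
    Real.sin_pi_div_six, hexp, deltaArg]
  push_cast
  field_simp

lemma log_deltaArg : log deltaArg = (-Real.log 3 / 2 : ℝ) + (Real.pi / 6 : ℝ) * I := by
  rw [deltaArg_eq_exp, log_exp] <;>
    simp only [add_im, ofReal_im, im_ofReal_mul, I_im] <;> linarith [Real.pi_pos]

lemma deltaArg_mem_unitLens : deltaArg ∈ unitLens := by
  have hnorm : ‖deltaArg‖ < 1 := by
    rw [deltaArg_eq_exp, norm_exp, Real.exp_lt_one_iff, add_re, ofReal_re, re_ofReal_mul, I_re]
    linarith [Real.log_pos (by norm_num : (1 : ℝ) < 3)]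
  exact mem_unitLens.2 ⟨hnorm, by rwa [one_sub_deltaArg_eq_conj, norm_conj]⟩

lemma log_one_sub_deltaArg :
    log (1 - deltaArg) = (-Real.log 3 / 2 : ℝ) - (Real.pi / 6 : ℝ) * I := by
  have hslit : deltaArg ∈ slitPlane := .inl (re_mem_Ioo_of_mem_unitLens deltaArg_mem_unitLens).1
  rw [one_sub_deltaArg_eq_conj, log_conj _ (slitPlane_arg_ne_pi hslit), log_deltaArg]
  simp only [map_add, map_mul, conj_ofReal, conj_I]
  ring

lemma sq_log_one_sub_deltaArg_sub_sq_log :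
    log (1 - deltaArg) ^ 2 - log deltaArg ^ 2 = Real.pi / 3 * Real.log 3 * I := by
  rw [log_one_sub_deltaArg, log_deltaArg]
  push_cast
  ring

theorem stmt_11 (δ₁ : ℝ)
    (hδ : (δ₁ : ℂ) = Complex.I * ∑' n : ℕ,
        ((((Real.sqrt 3 : ℂ) + Complex.I) / (2 * (Real.sqrt 3 : ℂ))) ^ (n + 1) -
          (((Real.sqrt 3 : ℂ) - Complex.I) / (2 * (Real.sqrt 3 : ℂ))) ^ (n + 1)) /
        ((n : ℂ) + 1) ^ 2) :
    ∑' n : ℕ, (harmonic n : ℝ) / ((2 * n + 1) * (Nat.choose (2 * n) n)) =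
      -(Real.pi / (3 * Real.sqrt 3)) * Real.log 3 - (2 / Real.sqrt 3) * δ₁ := by
  obtain ⟨hnorm, hnorm'⟩ := mem_unitLens.1 deltaArg_mem_unitLens
  rw [← deltaArg, ← one_sub_deltaArg, ← liTwo_sub_liTwo hnorm.le hnorm'.le] at hδ
  have hroot : 1 * (deltaArg * (1 - deltaArg)) = -(1 - 2 * deltaArg) ^ 2 := by
    linear_combination -3 * deltaArg_mul_one_sub
  have hsum := tsum_harmonic_mul_pow_div_centralBinom deltaArg_mem_unitLens (by norm_num) hroot
  rw [one_sub_two_mul_deltaArg, deltaArg_mul_one_sub, sq_log_one_sub_deltaArg_sub_sq_log] at hsum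
  have hsqrt := ofReal_sqrt_three_ne_zero
  apply ofReal_injective
  push_cast
  simp only [one_pow, mul_one, Nat.centralBinom] at hsum
  refine mul_left_cancel₀ (div_ne_zero (neg_ne_zero.2 I_ne_zero) hsqrt) (hsum.trans ?_)
  rw [hδ]
  field_simp
  simp only [ofReal_sqrt_three_sq]
  linear_combination 18 * (liTwo (1 - deltaArg) - liTwo deltaArg) * I_sq
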